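/- Let γ: ℝ/ℤ → ℝ³ be a continuous injective loop, let c ∈ ℝ³ be a point not in the image of γ, and let r > 0. Then the loop I_{c,r} ∘ γ is isotopic to the mirror image ρ ∘ γ of γ, where ρ: ℝ³ → ℝ³ is the reflection ρ(x₁,x₂,x₃) = (x₁,x₂,−x₃). (Consequently, if K is an E∘-minimizer of its isotopy class, then for any Möbius transformation T with T(K) ⊂ ℝ³, either T(K) or its mirror image belongs to the same isotopy class and is again an E∘-minimizer.) -/

import Mathlib

noncomputable section

/-- ℝ³ with the Euclidean norm. -/
abbrev E3 := EuclideanSpace ℝ (Fin 3)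

/-- Inversion in the sphere of center `c` and radius `r`. -/
def inv3 (c : E3) (r : ℝ) (x : E3) : E3 := c + (r ^ 2 / ‖x - c‖ ^ 2) • (x - c)

/-- The mirror reflection `ρ(x₁,x₂,x₃) = (x₁,x₂,−x₃)`. -/
def reflect3 (x : E3) : E3 := x - (2 * x 2) • EuclideanSpace.single (2 : Fin 3) (1 : ℝ)

/-- Two loops are isotopic if they can be joined by a continuous family of injective
loops. -/
def Isotopic (γ₀ γ₁ : ℝ → E3) : Prop :=
  ∃ H : ℝ → ℝ → E3, Continuous (Function.uncurry H) ∧ H 0 = γ₀ ∧ H 1 = γ₁ ∧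
    ∀ t ∈ Set.Icc (0:ℝ) 1,
      Function.Periodic (H t) 1 ∧ ∀ s s' : ℝ, H t s = H t s' → ∃ n : ℤ, s - s' = n

open MeasureTheory Set Metric Topology

lemma det_one_add_smul (A : E3 →L[ℝ] E3) (t : ℝ) :
    (ContinuousLinearMap.id ℝ E3 + t • A).det =
      1 + t * (((ContinuousLinearMap.id ℝ E3 + A).det - (ContinuousLinearMap.id ℝ E3 - A).det) / 2
        - A.det)
      + t ^ 2 * (((ContinuousLinearMap.id ℝ E3 + A).det
        + (ContinuousLinearMap.id ℝ E3 - A).det) / 2 - 1)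
      + t ^ 3 * A.det := by
  have key : ∀ B : E3 →L[ℝ] E3, B.det =
      (LinearMap.toMatrix (EuclideanSpace.basisFun (Fin 3) ℝ).toBasis
        (EuclideanSpace.basisFun (Fin 3) ℝ).toBasis (B : E3 →ₗ[ℝ] E3)).det := by
    intro B
    rw [LinearMap.det_toMatrix]
  rw [key, key, key, key]
  have hid : ((ContinuousLinearMap.id ℝ E3 : E3 →L[ℝ] E3) : E3 →ₗ[ℝ] E3) = LinearMap.id := rfl
  simp only [ContinuousLinearMap.toLinearMap_add, ContinuousLinearMap.toLinearMap_sub,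
    ContinuousLinearMap.toLinearMap_smul, map_add, map_sub, map_smul,
    hid, LinearMap.toMatrix_id]
  generalize LinearMap.toMatrix (EuclideanSpace.basisFun (Fin 3) ℝ).toBasis
        (EuclideanSpace.basisFun (Fin 3) ℝ).toBasis (A : E3 →ₗ[ℝ] E3) = M
  simp [Matrix.det_fin_three]
  ring

/-- Small multiples of a Lipschitz perturbation of the identity are bijective. -/
lemma perturb_bijective (h : E3 → E3) (K : NNReal) (hK : LipschitzWith K h) (t : ℝ) (ht : 0 ≤ t)
    (htK : t * K < 1) : Function.Bijective (fun x => x + t • h x) := by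
  have happ : ApproximatesLinearOn (fun x => x + t • h x)
      ((ContinuousLinearEquiv.refl ℝ E3 : E3 ≃L[ℝ] E3) : E3 →L[ℝ] E3) univ (t.toNNReal * K) := by
    intro x _ y _
    have h1 := hK.dist_le_mul x y
    rw [dist_eq_norm, dist_eq_norm] at h1
    have : (x + t • h x) - (y + t • h y) - (x - y) = t • (h x - h y) := by
      rw [smul_sub]; abel
    simp only [ContinuousLinearEquiv.coe_coe, ContinuousLinearEquiv.coe_refl', id]
    rw [this, norm_smul, Real.norm_of_nonneg ht]
    push_cast
    rw [Real.coe_toNNReal t ht, mul_assoc]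
    gcongr
  have hc : Subsingleton E3 ∨ t.toNNReal * K <
      ‖((ContinuousLinearEquiv.refl ℝ E3 : E3 ≃L[ℝ] E3).symm : E3 →L[ℝ] E3)‖₊⁻¹ := by
    right
    have : ‖((ContinuousLinearEquiv.refl ℝ E3 : E3 ≃L[ℝ] E3).symm : E3 →L[ℝ] E3)‖₊ = 1 := by
      simp
    rw [this, inv_one, ← NNReal.coe_lt_coe]
    push_cast
    rwa [Real.coe_toNNReal t ht]
  refine ⟨fun x y hxy => ?_, happ.surjective hc⟩
  have := happ.injective hc
  exact congrArg Subtype.val (@this ⟨x, mem_univ x⟩ ⟨y, mem_univ y⟩ hxy)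

lemma bounded_comp_fderiv (h : E3 → E3) (K : NNReal) (hK : LipschitzWith K h)
    (Φ : (E3 →L[ℝ] E3) → ℝ) (hΦ : Continuous Φ) :
    ∃ C : ℝ, ∀ x, |Φ (fderiv ℝ h x)| ≤ C := by
  have hcomp : IsCompact (closedBall (0 : E3 →L[ℝ] E3) K) := isCompact_closedBall _ _
  obtain ⟨C, hC⟩ := hcomp.exists_bound_of_continuousOn hΦ.continuousOn
  exact ⟨C, fun x => hC _ (by simpa using norm_fderiv_le_of_lipschitz ℝ hK)⟩

/-- No Lipschitz retraction. -/
lemma no_lipschitz_retraction (h : E3 → E3) (K : NNReal) (hK : LipschitzWith K h) (R : ℝ)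
    (hR : 0 < R) (h0 : ∀ x, R ≤ ‖x‖ → h x = 0) (hs : ∀ x, ‖x‖ < R → ‖x + h x‖ = R) : False := by
  obtain ⟨μ, hμ, hμnull⟩ : ∃ μ : Measure E3, μ.IsAddHaarMeasure ∧
      ∀ (f : E3 → E3) (L : NNReal), LipschitzWith L f → ∀ s, μ s = 0 → μ (f '' s) = 0 := by
    refine ⟨μH[(Module.finrank ℝ E3 : ℝ)], isAddHaarMeasure_hausdorffMeasure, ?_⟩
    intro f L hf s hs
    have := hf.hausdorffMeasure_image_le (d := (Module.finrank ℝ E3 : ℝ)) (by positivity) s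
    rw [hs, mul_zero] at this
    exact le_antisymm this (by simp)
  set D : Set E3 := {x | DifferentiableAt ℝ h x} with hD
  have hDm : MeasurableSet D := measurableSet_of_differentiableAt ℝ h
  have hDae : μ Dᶜ = 0 := hK.ae_differentiableAt
  set S : Set E3 := ball 0 R ∩ D with hS
  have hSm : MeasurableSet S := measurableSet_ball.inter hDm
  have hSfin : μ S ≠ ⊤ := ((measure_mono inter_subset_left).trans_lt measure_ball_lt_top).ne
  have hSV : μ S = μ (ball 0 R) := by
    apply measure_inter_conull
    exact hDae
  set V : ℝ := (μ (ball (0:E3) R)).toReal with hV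
  have hVpos : 0 < V :=
    ENNReal.toReal_pos (measure_ball_pos μ _ hR).ne' measure_ball_lt_top.ne
  set A : E3 → (E3 →L[ℝ] E3) := fun x => fderiv ℝ h x with hA
  have hAm : Measurable A := measurable_fderiv ℝ h
  let ι := ContinuousLinearMap.id ℝ E3
  have cP : Continuous (fun B : E3 →L[ℝ] E3 => (ι + B).det) :=
    ContinuousLinearMap.continuous_det.comp (by fun_prop)
  have cN : Continuous (fun B : E3 →L[ℝ] E3 => (ι - B).det) :=
    ContinuousLinearMap.continuous_det.comp (by fun_prop)
  have cD : Continuous (fun B : E3 →L[ℝ] E3 => B.det) := ContinuousLinearMap.continuous_det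
  let φ₁ : (E3 →L[ℝ] E3) → ℝ := fun B => ((ι + B).det - (ι - B).det) / 2 - B.det
  let φ₂ : (E3 →L[ℝ] E3) → ℝ := fun B => ((ι + B).det + (ι - B).det) / 2 - 1
  let φ₃ : (E3 →L[ℝ] E3) → ℝ := fun B => B.det
  have c1 : Continuous φ₁ := by fun_prop
  have c2 : Continuous φ₂ := by fun_prop
  have c3 : Continuous φ₃ := cD
  obtain ⟨C1, hC1⟩ := bounded_comp_fderiv h K hK φ₁ c1
  obtain ⟨C2, hC2⟩ := bounded_comp_fderiv h K hK φ₂ c2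
  obtain ⟨C3, hC3⟩ := bounded_comp_fderiv h K hK φ₃ c3
  have i1 : IntegrableOn (fun x => φ₁ (A x)) S μ :=
    Measure.integrableOn_of_bounded hSfin (c1.measurable.comp hAm).aestronglyMeasurable
      (M := C1) (Filter.Eventually.of_forall hC1)
  have i2 : IntegrableOn (fun x => φ₂ (A x)) S μ :=
    Measure.integrableOn_of_bounded hSfin (c2.measurable.comp hAm).aestronglyMeasurable
      (M := C2) (Filter.Eventually.of_forall hC2)
  have i3 : IntegrableOn (fun x => φ₃ (A x)) S μ :=
    Measure.integrableOn_of_bounded hSfin (c3.measurable.comp hAm).aestronglyMeasurable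
      (M := C3) (Filter.Eventually.of_forall hC3)
  have i0 : IntegrableOn (fun _ : E3 => (1 : ℝ)) S μ := integrableOn_const hSfin
  have hexp : ∀ t : ℝ, ∫ x in S, (ι + t • A x).det ∂μ =
      V + t * ∫ x in S, φ₁ (A x) ∂μ + t ^ 2 * ∫ x in S, φ₂ (A x) ∂μ
        + t ^ 3 * ∫ x in S, φ₃ (A x) ∂μ := by
    intro t
    have : ∀ x, (ι + t • A x).det = 1 + t * φ₁ (A x) + t ^ 2 * φ₂ (A x) + t ^ 3 * φ₃ (A x) :=
      fun x => det_one_add_smul (A x) t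
    simp_rw [this]
    rw [integral_add, integral_add, integral_add, integral_const_mul, integral_const_mul,
      integral_const_mul]
    · congr 3
      simp [Measure.real, hSV, hV]
    all_goals first
      | exact i0
      | exact i1.const_mul _
      | exact i2.const_mul _
      | exact i3.const_mul _
      | exact i0.add (i1.const_mul _)
      | exact (i0.add (i1.const_mul _)).add (i2.const_mul _)
  have hC1' : 0 ≤ C1 := (abs_nonneg _).trans (hC1 0)
  have hC2' : 0 ≤ C2 := (abs_nonneg _).trans (hC2 0)
  have hC3' : 0 ≤ C3 := (abs_nonneg _).trans (hC3 0)
  have hsmall : ∀ t : ℝ, 0 < t → t ≤ 1 / (1 + K + C1 + C2 + C3) →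
      ∫ x in S, (ι + t • A x).det ∂μ = V := by
    intro t ht htle
    have hK0 : (0:ℝ) ≤ K := K.2
    rw [le_div_iff₀ (by positivity)] at htle
    have htK : t * K < 1 := by nlinarith [mul_nonneg ht.le hC1', mul_nonneg ht.le hC2', mul_nonneg ht.le hC3']
    have ht1 : t ≤ 1 := by nlinarith [mul_nonneg ht.le hC1', mul_nonneg ht.le hC2', mul_nonneg ht.le hC3', mul_nonneg ht.le hK0]
    have hbij := perturb_bijective h K hK t ht.le htK
    set f : E3 → E3 := fun x => x + t • h x with hf
    have hpos : ∀ x, 0 ≤ (ι + t • A x).det := by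
      intro x
      rw [det_one_add_smul (A x) t]
      have e1 := (abs_le.1 (hC1 x)).1
      have e2 := (abs_le.1 (hC2 x)).1
      have e3 := (abs_le.1 (hC3 x)).1
      have f1 : t * (-C1) ≤ t * φ₁ (A x) := by gcongr
      have f2 : t ^ 2 * (-C2) ≤ t ^ 2 * φ₂ (A x) := by gcongr
      have f3 : t ^ 3 * (-C3) ≤ t ^ 3 * φ₃ (A x) := by gcongr
      have g2 : t ^ 2 * C2 ≤ t * C2 := by
        have : t ^ 2 ≤ t := by nlinarith
        gcongr
      have g3 : t ^ 3 * C3 ≤ t * C3 := by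
        have : t ^ 3 ≤ t := pow_le_of_le_one ht.le ht1 (by norm_num)
        gcongr
      change 0 ≤ 1 + t * φ₁ (A x) + t ^ 2 * φ₂ (A x) + t ^ 3 * φ₃ (A x)
      nlinarith [mul_nonneg ht.le hK0]
    have himg : f '' ball 0 R = ball 0 R := by
      have hout : ∀ x, R ≤ ‖x‖ → f x = x := fun x hx => by simp [hf, h0 x hx]
      ext y
      constructor
      · rintro ⟨x, hx, rfl⟩
        by_contra hy
        have hy' : R ≤ ‖f x‖ := by simpa using hy
        have := hbij.1 (hout _ hy')
        rw [this] at hy'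
        have : ‖x‖ < R := by simpa using hx
        linarith
      · intro hy
        obtain ⟨x, hx⟩ := hbij.2 y
        refine ⟨x, ?_, hx⟩
        by_contra hx'
        have hx'' : R ≤ ‖x‖ := by simpa using hx'
        have h2 := hout x hx''
        have : x = y := h2.symm.trans hx
        exact hx' (this ▸ hy)
    have hflip : LipschitzWith (1 + ‖t‖₊ * K) f :=
      LipschitzWith.id.add ((lipschitzWith_smul t).comp hK)
    have himgS : μ (f '' S) = μ (ball 0 R) := by
      apply le_antisymm
      · rw [← himg]
        exact measure_mono (image_mono inter_subset_left)
      · have hnull : μ (f '' Dᶜ) = 0 := hμnull f _ hflip _ hDae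
        calc μ (ball 0 R) ≤ μ (f '' S ∪ f '' Dᶜ) := by
              apply measure_mono
              rw [← himg, ← image_union]
              apply image_mono
              intro x hx
              by_cases hxD : x ∈ D
              · exact Or.inl ⟨hx, hxD⟩
              · exact Or.inr hxD
          _ ≤ μ (f '' S) + μ (f '' Dᶜ) := measure_union_le _ _
          _ = μ (f '' S) := by rw [hnull, add_zero]
    have hcv := integral_image_eq_integral_abs_det_fderiv_smul μ hSm (f := f)
      (f' := fun x => ι + t • A x) (fun x hx => by
        have hd : DifferentiableAt ℝ h x := hx.2
        exact ((hasFDerivAt_id x).add (hd.hasFDerivAt.const_smul t)).hasFDerivWithinAt)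
      hbij.1.injOn (fun _ => (1:ℝ))
    simp only [smul_eq_mul, mul_one] at hcv
    simp_rw [abs_of_nonneg (hpos _)] at hcv
    rw [← hcv]
    simp [Measure.real, himgS, hV]
  have hone : ∫ x in S, (ι + (1:ℝ) • A x).det ∂μ = V := by
    set δ : ℝ := 1 / (1 + K + C1 + C2 + C3) with hδ
    have hδpos : 0 < δ := by have : (0:ℝ) ≤ K := K.2; positivity
    have e1 := hsmall δ hδpos le_rfl
    have e2 := hsmall (δ/2) (by positivity) (by linarith)
    have e3 := hsmall (δ/3) (by positivity) (by linarith)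
    rw [hexp] at e1 e2 e3 ⊢
    generalize (∫ x in S, φ₁ (A x) ∂μ) = I1 at *
    generalize (∫ x in S, φ₂ (A x) ∂μ) = I2 at *
    generalize (∫ x in S, φ₃ (A x) ∂μ) = I3 at *
    have g1 : I1 + δ * I2 + δ^2 * I3 = 0 := by
      apply mul_left_cancel₀ hδpos.ne'; linarith
    have g2 : I1 + δ/2 * I2 + δ^2/4 * I3 = 0 := by
      apply mul_left_cancel₀ hδpos.ne'; linarith
    have g3 : I1 + δ/3 * I2 + δ^2/9 * I3 = 0 := by
      apply mul_left_cancel₀ hδpos.ne'; linarith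
    have k3 : δ^2 * I3 = 0 := by linarith
    have k2 : δ * I2 = 0 := by linarith
    have z3 : I3 = 0 := by simpa [hδpos.ne'] using k3
    have z2 : I2 = 0 := by simpa [hδpos.ne'] using k2
    have z1 : I1 = 0 := by rw [z2, z3] at g1; linarith
    rw [z1, z2, z3]; ring
  have hzero : ∫ x in S, (ι + (1:ℝ) • A x).det ∂μ = 0 := by
    rw [setIntegral_congr_fun hSm (g := fun _ => (0:ℝ))]
    · simp
    intro x hx
    simp only [one_smul]
    by_contra hdet
    have hd : DifferentiableAt ℝ h x := hx.2
    have hG : HasFDerivAt (fun y => y + h y) (ι + A x) x := (hasFDerivAt_id x).add hd.hasFDerivAt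
    have hn := hG.norm_sq
    have hconst : (fun y => ‖y + h y‖ ^ 2) =ᶠ[𝓝 x] fun _ => R ^ 2 := by
      filter_upwards [isOpen_ball.mem_nhds hx.1] with y hy
      rw [hs y (by simpa using hy)]
    have hn2 : HasFDerivAt (fun y => ‖y + h y‖ ^ 2) (0 : E3 →L[ℝ] ℝ) x :=
      (hasFDerivAt_const (R^2) x).congr_of_eventuallyEq hconst
    have heq := hn.unique hn2
    let e := ContinuousLinearMap.toContinuousLinearEquivOfDetNeZero (ι + A x) hdet
    have h3 := congrArg (fun L : E3 →L[ℝ] ℝ => L (e.symm (x + h x))) heq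
    have h4 : (ι + A x) (e.symm (x + h x)) = x + h x := e.apply_symm_apply (x + h x)
    have h5 : 2 * inner ℝ (x + h x) ((ι + A x) (e.symm (x + h x))) = 0 := by
      have h6 : (2 • (innerSL ℝ (x + h x)).comp (ι + A x)) (e.symm (x + h x)) = (0:ℝ) := h3
      rw [two_smul] at h6
      rw [two_mul]
      exact h6
    rw [h4, real_inner_self_eq_norm_sq, hs x (by simpa using hx.1)] at h5
    have : 0 < R ^ 2 := by positivity
    linarith
  linarith

lemma radial_lip (R m : ℝ) (hR : 0 < R) (hm : 0 < m) (y z : E3) (hy : m ≤ ‖y‖) (hz : m ≤ ‖z‖) :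
    ‖max (R / ‖y‖ - 1) 0 • y - max (R / ‖z‖ - 1) 0 • z‖ ≤ (2 * R / m) * ‖y - z‖ := by
  have hy0 : 0 < ‖y‖ := hm.trans_le hy
  have hz0 : 0 < ‖z‖ := hm.trans_le hz
  have e : max (R / ‖y‖ - 1) 0 • y - max (R / ‖z‖ - 1) 0 • z =
      max (R / ‖y‖ - 1) 0 • (y - z) + (max (R / ‖y‖ - 1) 0 - max (R / ‖z‖ - 1) 0) • z := by
    module
  rw [e]
  have h1 : |max (R / ‖y‖ - 1) 0| ≤ R / m := by
    rw [abs_of_nonneg (le_max_right _ _)]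
    have : R / ‖y‖ ≤ R / m := by gcongr
    exact max_le (by linarith) (by positivity)
  have h2 : |max (R / ‖y‖ - 1) 0 - max (R / ‖z‖ - 1) 0| ≤ R / m * ‖y - z‖ / ‖z‖ := by
    refine (abs_max_sub_max_le_abs _ _ _).trans ?_
    have : R / ‖y‖ - 1 - (R / ‖z‖ - 1) = R * (‖z‖ - ‖y‖) / (‖y‖ * ‖z‖) := by
      field_simp
      ring
    rw [this, abs_div, abs_mul, abs_of_pos hR, abs_of_pos (mul_pos hy0 hz0)]
    have h3 : |‖z‖ - ‖y‖| ≤ ‖y - z‖ := by rw [norm_sub_rev]; exact abs_norm_sub_norm_le _ _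
    calc R * |‖z‖ - ‖y‖| / (‖y‖ * ‖z‖) ≤ R * ‖y - z‖ / (m * ‖z‖) := by gcongr
      _ = R / m * ‖y - z‖ / ‖z‖ := by field_simp
  refine (norm_add_le _ _).trans ?_
  rw [norm_smul, norm_smul, Real.norm_eq_abs, Real.norm_eq_abs]
  calc _ ≤ R / m * ‖y - z‖ + R / m * ‖y - z‖ / ‖z‖ * ‖z‖ := by gcongr
    _ = _ := by field_simp; ring

/-- A continuous self-map of space that is the identity near infinity hits the origin. -/
lemma no_missing (G : E3 → E3) (hG : Continuous G) (hne : ∀ x, G x ≠ 0) (R₀ : ℝ)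
    (hid : ∀ x, R₀ ≤ ‖x‖ → G x = x) : False := by
  obtain ⟨h₁, hsm, happ, hsupp⟩ := Continuous.exists_contDiff_approx (f := fun x => G x - x)
    (ε := fun x => ‖G x‖ / 2) 1 (by fun_prop) (by fun_prop)
    (fun x => half_pos (norm_pos_iff.2 (hne x)))
  have h₁0 : ∀ x, R₀ ≤ ‖x‖ → h₁ x = 0 := by
    intro x hx
    by_contra hx'
    exact hsupp hx' (by simp [hid x hx])
  have hcs : HasCompactSupport h₁ := by
    refine HasCompactSupport.intro (isCompact_closedBall (0:E3) R₀) fun x hx => h₁0 x ?_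
    simp only [mem_closedBall, dist_zero_right, not_le] at hx
    exact hx.le
  obtain ⟨L, hL⟩ := hsm.lipschitzWith_of_hasCompactSupport hcs (by norm_num)
  have hcont : Continuous h₁ := hL.continuous
  set G₁ : E3 → E3 := fun x => x + h₁ x with hG₁
  have hG₁c : Continuous G₁ := by fun_prop
  have hG₁ne : ∀ x, G₁ x ≠ 0 := by
    intro x hx
    have h2 := happ x
    have h3 : h₁ x = -x := by rw [hG₁] at hx; exact (neg_eq_of_add_eq_zero_right hx).symm
    rw [h3, dist_eq_norm] at h2
    have : -x - (G x - x) = - G x := by abel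
    rw [this, norm_neg] at h2
    have := norm_pos_iff.2 (hne x)
    linarith
  set R₁ := max R₀ 1 with hR₁
  have hout : ∀ x, R₁ ≤ ‖x‖ → G₁ x = x := fun x hx => by
    simp [hG₁, h₁0 x ((le_max_left _ _).trans hx)]
  have hR₁1 : 1 ≤ R₁ := le_max_right _ _
  obtain ⟨x₀, -, hx₀⟩ := (isCompact_closedBall (0:E3) R₁).exists_isMinOn
    ⟨0, by simp; linarith⟩ hG₁c.norm.continuousOn
  obtain ⟨C, hC⟩ := (isCompact_closedBall (0:E3) R₁).exists_bound_of_continuousOn hG₁c.continuousOn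
  set m := min ‖G₁ x₀‖ 1 with hm
  have hmpos : 0 < m := lt_min (norm_pos_iff.2 (hG₁ne x₀)) one_pos
  have hmle : ∀ x, m ≤ ‖G₁ x‖ := by
    intro x
    rcases le_total ‖x‖ R₁ with hx | hx
    · exact (min_le_left _ _).trans (hx₀ (by simpa using hx))
    · rw [hout x hx]
      exact (min_le_right _ _).trans (hR₁1.trans hx)
  set R := max R₁ C with hR
  have hRpos : 0 < R := one_pos.trans_le (hR₁1.trans (le_max_left _ _))
  have hRle : ∀ x, ‖x‖ < R → ‖G₁ x‖ ≤ R := by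
    intro x hxR
    rcases le_total ‖x‖ R₁ with hx | hx
    · exact (hC x (by simpa using hx)).trans (le_max_right _ _)
    · rw [hout x hx]
      exact hxR.le
  have hLG : LipschitzWith (1 + L) G₁ := LipschitzWith.id.add hL
  have hk : LipschitzWith ((2 * R / m).toNNReal * (1 + L))
      (fun x => max (R / ‖G₁ x‖ - 1) 0 • G₁ x) := by
    refine LipschitzWith.of_dist_le_mul fun x y => ?_
    rw [dist_eq_norm]
    refine (radial_lip R m hRpos hmpos _ _ (hmle x) (hmle y)).trans ?_
    have := hLG.dist_le_mul x y
    rw [dist_eq_norm (G₁ x)] at this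
    rw [NNReal.coe_mul, Real.coe_toNNReal _ (by positivity), mul_assoc]
    gcongr
  refine no_lipschitz_retraction (fun x => h₁ x + max (R / ‖G₁ x‖ - 1) 0 • G₁ x) _
    (hL.add hk) R hRpos ?_ ?_
  · intro x hx
    have hx1 : R₁ ≤ ‖x‖ := (le_max_left _ _).trans hx
    have hx0 : 0 < ‖x‖ := hRpos.trans_le hx
    have : R / ‖x‖ - 1 ≤ 0 := by
      rw [sub_nonpos, div_le_one hx0]; exact hx
    rw [hout x hx1, h₁0 x ((le_max_left _ _).trans hx1), max_eq_right this]
    simp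
  · intro x hx
    have h1 := hRle x hx
    have h2 : 0 < ‖G₁ x‖ := norm_pos_iff.2 (hG₁ne x)
    have h3 : 0 ≤ R / ‖G₁ x‖ - 1 := by
      rw [sub_nonneg, one_le_div h2]; exact h1
    have h4 : x + (h₁ x + max (R / ‖G₁ x‖ - 1) 0 • G₁ x) = (R / ‖G₁ x‖) • G₁ x := by
      rw [max_eq_left h3, ← add_assoc, sub_smul, one_smul]
      change G₁ x + _ = _
      abel
    rw [h4, norm_smul, Real.norm_of_nonneg (by positivity)]
    field_simp

lemma extend_step (X : Set E3) (hX : IsClosed X) (p Q : E3 → E3) (hp : Continuous p)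
    (hQ : Continuous Q) (hQ0 : ∀ x, Q x ≠ 0) (hseg : ∀ x ∈ X, ¬ Wbtw ℝ (p x) 0 (Q x)) :
    ∃ P : E3 → E3, Continuous P ∧ (∀ x, P x ≠ 0) ∧ ∀ x ∈ X, P x = p x := by
  have hZ : IsClosed {x | dist (p x) 0 + dist 0 (Q x) = dist (p x) (Q x)} :=
    isClosed_eq (by fun_prop) (by fun_prop)
  obtain ⟨τ, h0, h1, h01⟩ := exists_continuous_zero_one_of_isClosed hX hZ (by
    rw [Set.disjoint_left]
    intro x hx hx'
    exact hseg x hx (dist_add_dist_eq_iff.1 hx'))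
  refine ⟨fun x => AffineMap.lineMap (p x) (Q x) (τ x), ?_, ?_, ?_⟩
  · simp only [AffineMap.lineMap_apply_module]
    fun_prop
  · intro x hx
    have hw : Wbtw ℝ (p x) 0 (Q x) := ⟨τ x, h01 x, hx⟩
    have := h1 (dist_add_dist_eq_iff.2 hw)
    simp only [this] at hx
    exact hQ0 x (by simpa using hx)
  · intro x hx
    simp [h0 hx]

lemma smooth_periodic_approx (f : ℝ → E3) (hf : Continuous f) (hper : Function.Periodic f 1)
    (ε : ℝ) (hε : 0 < ε) :
    ∃ g : ℝ → E3, ContDiff ℝ 1 g ∧ Function.Periodic g 1 ∧ ∀ s, ‖g s - f s‖ ≤ ε := by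
  have huc : UniformContinuous f := by
    let fl : AddCircle (1:ℝ) → E3 := Function.Periodic.lift hper
    have hfl : Continuous fl := continuous_coinduced_dom.2 hf
    have h1 : UniformContinuous fl := CompactSpace.uniformContinuous_of_continuous hfl
    have h2 : UniformContinuous (fun s : ℝ => (s : AddCircle (1:ℝ))) :=
      uniformContinuous_of_continuousAt_zero (QuotientAddGroup.mk' _)
        (AddCircle.continuous_mk' (1:ℝ)).continuousAt
    exact h1.comp h2
  obtain ⟨δ, hδ, hd⟩ := Metric.uniformContinuous_iff.1 huc ε hε
  have hi : ∀ a b, IntervalIntegrable f volume a b := fun a b => hf.intervalIntegrable a b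
  set d := δ / 2 with hdd
  have hdpos : 0 < d := by positivity
  refine ⟨fun s => d⁻¹ • ∫ u in (0:ℝ)..d, f (s + u), ?_, ?_, ?_⟩
  · have hF : ContDiff ℝ 1 (fun s => ∫ u in (0:ℝ)..s, f u) := by
      rw [contDiff_one_iff_deriv]
      have hda : ∀ s, HasDerivAt (fun s => ∫ u in (0:ℝ)..s, f u) (f s) s := fun s =>
        hf.integral_hasStrictDerivAt 0 s |>.hasDerivAt
      refine ⟨fun s => (hda s).differentiableAt, ?_⟩
      have : deriv (fun s => ∫ u in (0:ℝ)..s, f u) = f := funext fun s => (hda s).deriv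
      rw [this]; exact hf
    have heq : (fun s => d⁻¹ • ∫ u in (0:ℝ)..d, f (s + u)) =
        fun s => d⁻¹ • ((∫ u in (0:ℝ)..(s + d), f u) - ∫ u in (0:ℝ)..s, f u) := by
      funext s
      rw [intervalIntegral.integral_interval_sub_left (hi _ _) (hi _ _),
        intervalIntegral.integral_comp_add_left, add_zero]
    rw [heq]
    exact ((hF.comp (contDiff_id.add contDiff_const)).sub hF).const_smul _
  · intro s
    simp only
    congr 2
    funext u
    rw [show s + 1 + u = (s + u) + 1 by ring, hper]
  · intro s
    have e : d⁻¹ • (∫ u in (0:ℝ)..d, f (s + u)) - f s =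
        d⁻¹ • ∫ u in (0:ℝ)..d, (f (s + u) - f s) := by
      rw [intervalIntegral.integral_sub]
      · simp only [intervalIntegral.integral_const, sub_zero, smul_sub, smul_smul]
        rw [inv_mul_cancel₀ hdpos.ne', one_smul]
      · exact (hf.comp (by fun_prop)).intervalIntegrable _ _
      · exact continuous_const.intervalIntegrable _ _
    rw [e, norm_smul, norm_inv, Real.norm_of_nonneg hdpos.le]
    have : ‖∫ u in (0:ℝ)..d, (f (s + u) - f s)‖ ≤ ε * |d - 0| := by
      apply intervalIntegral.norm_integral_le_of_norm_le_const
      intro u hu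
      rw [uIoc_of_le hdpos.le] at hu
      rw [← dist_eq_norm]
      apply (hd _).le
      rw [Real.dist_eq]
      have : s + u - s = u := by ring
      rw [this, abs_of_pos hu.1]
      linarith [hu.2]
    rw [sub_zero, abs_of_pos hdpos] at this
    rw [inv_mul_le_iff₀ hdpos]
    linarith

lemma exists_nonvanishing (γ : ℝ → E3) (hcont : Continuous γ) (hper : Function.Periodic γ 1)
    (hinj : ∀ s t : ℝ, γ s = γ t → ∃ n : ℤ, s - t = n)
    (c : E3) (hc : c ∉ Set.range γ) (hX : IsCompact (range γ)) :
    ∃ F : E3 → E3, Continuous F ∧ (∀ x, F x ≠ 0) ∧ ∀ x ∈ range γ, F x = x - c := by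
  obtain ⟨ε, hε, hεc⟩ : ∃ ε > 0, ∀ s, ε ≤ ‖γ s - c‖ := by
    obtain ⟨ε, hε, hb⟩ := Metric.isOpen_iff.1 hX.isClosed.isOpen_compl c hc
    refine ⟨ε, hε, fun s => ?_⟩
    by_contra hlt
    exact hb (show γ s ∈ ball c ε by rw [mem_ball, dist_eq_norm]; linarith) (mem_range_self s)
  obtain ⟨g, hg, hgper, hgapp⟩ := smooth_periodic_approx (fun s => γ s - c) (by fun_prop)
    (fun s => by simp only [hper s]) (ε / 2) (by positivity)
  have hg0 : ∀ s, g s ≠ 0 := by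
    intro s hs
    have h1 := hgapp s
    have h2 := hεc s
    rw [hs, zero_sub, norm_neg] at h1
    linarith
  obtain ⟨v, hv⟩ : ∃ v : E3, ∀ (l s : ℝ), v ≠ l • g s := by
    have hcd : ContDiff ℝ 1 (fun q : ℝ × ℝ => q.1 • g q.2) :=
      contDiff_fst.smul (hg.comp contDiff_snd)
    have := hcd.dense_compl_range_of_finrank_lt_finrank (by simp)
    obtain ⟨v, hv⟩ := this.nonempty
    exact ⟨v, fun l s h => hv ⟨(l, s), h.symm⟩⟩
  have hv0 : v ≠ 0 := by simpa using hv 0 0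
  let e : AddCircle (1:ℝ) → E3 := hper.lift
  have hec : Continuous e := continuous_coinduced_dom.2 hcont
  have hei : Function.Injective e := by
    intro a b hab
    induction a using QuotientAddGroup.induction_on with | H a => ?_
    induction b using QuotientAddGroup.induction_on with | H b => ?_
    obtain ⟨n, hn⟩ := hinj a b hab
    rw [QuotientAddGroup.eq, AddSubgroup.mem_zmultiples_iff]
    refine ⟨-n, ?_⟩
    simp
    linarith
  have hemb : IsClosedEmbedding e := hec.isClosedEmbedding hei
  let gc : C(AddCircle (1:ℝ), E3) := ⟨hgper.lift, continuous_coinduced_dom.2 hg.continuous⟩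
  obtain ⟨gt, hgt⟩ := ContinuousMap.exists_extension hemb gc
  have hgt' : ∀ s, gt (γ s) = g s := fun s => DFunLike.congr_fun hgt (s : AddCircle (1:ℝ))
  obtain ⟨Q, hQc, hQ0, hQX⟩ := extend_step (range γ) hX.isClosed gt (fun _ => v) gt.continuous
    continuous_const (fun _ => hv0) (by
      rintro _ ⟨s, rfl⟩ ⟨t, ht, hw⟩
      rw [hgt', AffineMap.lineMap_apply_module] at hw
      by_cases h0 : t = 0
      · subst h0
        exact hg0 s (by simpa using hw)
      · apply hv (-(t⁻¹ * (1 - t))) s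
        have h1 : t • v = -((1 - t) • g s) := by
          rw [eq_neg_iff_add_eq_zero, add_comm]; exact hw
        calc v = t⁻¹ • (t • v) := by rw [smul_smul, inv_mul_cancel₀ h0, one_smul]
          _ = _ := by rw [h1]; module)
  obtain ⟨F, hFc, hF0, hFX⟩ := extend_step (range γ) hX.isClosed (fun x => x - c) Q (by fun_prop)
    hQc hQ0 (by
      rintro _ ⟨s, rfl⟩ ⟨t, ht, hw⟩
      rw [hQX _ (mem_range_self s), hgt', AffineMap.lineMap_apply_module] at hw
      have h1 : γ s - c = - (t • (g s - (γ s - c))) := by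
        rw [eq_neg_iff_add_eq_zero, ← hw]; module
      have h2 := hεc s
      rw [h1, norm_neg, norm_smul, Real.norm_of_nonneg ht.1] at h2
      have h3 := hgapp s
      have : t * ‖g s - (γ s - c)‖ ≤ 1 * (ε / 2) :=
        mul_le_mul ht.2 h3 (norm_nonneg _) zero_le_one
      linarith)
  exact ⟨F, hFc, hF0, hFX⟩

lemma isPathConnected_outside (M : ℝ) (hM : 0 ≤ M) : IsPathConnected {x : E3 | M < ‖x‖} := by
  have h1 : IsPathConnected ({0}ᶜ : Set E3) := by
    apply isPathConnected_compl_singleton_of_one_lt_rank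
    rw [← Module.finrank_eq_rank]
    simp
  have h2 : {x : E3 | M < ‖x‖} = (fun x : E3 => (1 + M / ‖x‖) • x) '' ({0}ᶜ : Set E3) := by
    ext x
    constructor
    · intro hx
      have hx : M < ‖x‖ := hx
      have hx0 : 0 < ‖x‖ := hM.trans_lt hx
      have hk : 0 < 1 - M / ‖x‖ := by rw [sub_pos, div_lt_one hx0]; exact hx
      refine ⟨(1 - M / ‖x‖) • x, ?_, ?_⟩
      · simp [hk.ne', norm_pos_iff.1 hx0]
      · simp only
        rw [norm_smul, Real.norm_of_nonneg hk.le, smul_smul]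
        convert one_smul ℝ x using 2
        have : ‖x‖ - M ≠ 0 := by linarith
        field_simp
        ring
    · rintro ⟨y, hy, rfl⟩
      have hy0 : 0 < ‖y‖ := norm_pos_iff.2 hy
      change M < ‖_‖
      rw [norm_smul, Real.norm_of_nonneg (by positivity)]
      have : (1 + M / ‖y‖) * ‖y‖ = ‖y‖ + M := by field_simp
      linarith
  rw [h2]
  apply h1.image'
  intro x hx
  have : ‖x‖ ≠ 0 := norm_ne_zero_iff.2 hx
  exact ContinuousAt.continuousWithinAt (by fun_prop (disch := assumption))

lemma joined_to_infinity (γ : ℝ → E3) (hcont : Continuous γ) (hper : Function.Periodic γ 1)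
    (hinj : ∀ s t : ℝ, γ s = γ t → ∃ n : ℤ, s - t = n)
    (c : E3) (hc : c ∉ Set.range γ) :
    ∃ M : ℝ, 0 < M ∧ (∀ s, ‖γ s‖ < M) ∧
      JoinedIn (range γ)ᶜ c (EuclideanSpace.single (2 : Fin 3) M) := by
  have hX : IsCompact (range γ) := by
    rw [← hper.image_Icc one_pos 0]
    exact isCompact_Icc.image hcont
  obtain ⟨F, hFc, hF0, hFX⟩ := exists_nonvanishing γ hcont hper hinj c hc hX
  obtain ⟨M₀, hM₀⟩ := hX.isBounded.exists_norm_le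
  have hM₀' : ∀ s, ‖γ s‖ ≤ M₀ := fun s => hM₀ _ (mem_range_self s)
  have hM₀0 : 0 ≤ M₀ := (norm_nonneg _).trans (hM₀' 0)
  refine ⟨M₀ + 1, by linarith, fun s => by linarith [hM₀' s], ?_⟩
  set z : E3 := EuclideanSpace.single (2 : Fin 3) (M₀ + 1) with hz
  have hznorm : M₀ < ‖z‖ := by
    rw [hz, PiLp.norm_single, Real.norm_of_nonneg (by linarith)]
    linarith
  have hopen : IsOpen (range γ)ᶜ := hX.isClosed.isOpen_compl
  set V := pathComponentIn (range γ)ᶜ z with hV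
  have hVo : IsOpen V := hopen.pathComponentIn z
  have hOV : {x : E3 | M₀ < ‖x‖} ⊆ V := by
    apply (isPathConnected_outside M₀ hM₀0).subset_pathComponentIn hznorm
    rintro x hx ⟨s, rfl⟩
    exact absurd (hM₀' s) (not_le.2 hx)
  by_contra hcon
  have hcV : c ∉ V := fun h => hcon (JoinedIn.symm h)
  have hfr : ∀ x ∈ frontier V, x ∈ range γ := by
    intro x hx
    by_contra hxX
    have hxc : x ∈ closure V := hx.1
    obtain ⟨y, hy1, hy2⟩ := mem_closure_iff.1 hxc _ (hopen.pathComponentIn x)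
      (mem_pathComponentIn_self hxX)
    apply hx.2
    rw [hVo.interior_eq]
    exact JoinedIn.trans hy2 (JoinedIn.symm hy1)
  classical
  have hH : Continuous (fun x => if x ∈ V then x - c else F x) := by
    apply Continuous.if _ (by fun_prop) hFc
    intro x hx
    exact (hFX x (hfr x hx)).symm
  refine no_missing (fun y => if y + c ∈ V then (y + c) - c else F (y + c))
    (hH.comp (continuous_id.add continuous_const)) ?_ (M₀ + 1 + ‖c‖) ?_
  · intro y
    split_ifs with h
    · intro h0
      rw [add_sub_cancel_right] at h0
      rw [h0, zero_add] at h
      exact hcV h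
    · exact hF0 _
  · intro y hy
    have : y + c ∈ V := by
      apply hOV
      have := norm_sub_le (y + c) c
      rw [add_sub_cancel_right] at this
      change M₀ < _
      linarith
    simp [this]

/-- The space of periodic injective loops. -/
def Loops : Set C(ℝ, E3) :=
  {f | Function.Periodic f 1 ∧ ∀ s s' : ℝ, f s = f s' → ∃ n : ℤ, s - s' = n}

lemma isotopic_of_joinedIn (f g : C(ℝ, E3)) (h : JoinedIn Loops f g) : Isotopic f g := by
  obtain ⟨p, hp⟩ := h
  refine ⟨fun t s => p.extend t s, ?_, ?_, ?_, ?_⟩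
  · exact continuous_eval.comp ((p.extend.continuous.comp continuous_fst).prodMk continuous_snd)
  · simp
  · simp
  · intro t ht
    have := hp ⟨t, ht⟩
    simp only [p.extend_apply ht]
    exact this

lemma joinedIn_of_family (H : C(unitInterval × ℝ, E3)) (h : ∀ t, H.curry t ∈ Loops) :
    JoinedIn Loops (H.curry 0) (H.curry 1) :=
  ⟨⟨H.curry, rfl, rfl⟩, h⟩

lemma inv3_injective (c : E3) (r : ℝ) (hr : r ≠ 0) : Function.Injective (inv3 c r) := by
  have : inv3 c r = EuclideanGeometry.inversion c r := by
    funext x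
    simp [inv3, EuclideanGeometry.inversion, dist_eq_norm, div_pow, add_comm]
  rw [this]
  exact EuclideanGeometry.inversion_injective c hr

lemma reflect3_injective : Function.Injective reflect3 := by
  have : Function.Involutive reflect3 := by
    intro x
    ext i
    fin_cases i <;> simp [reflect3]
    ring
  exact this.injective

/-- Inversions in large spheres through the origin, degenerating to the reflection. -/
def bigInv (μ : ℝ) (x : E3) : E3 :=
  (‖EuclideanSpace.single (2 : Fin 3) (1 : ℝ) - μ • x‖ ^ 2)⁻¹ •
    (x - (2 * x 2) • EuclideanSpace.single (2 : Fin 3) (1 : ℝ)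
      + (μ * ‖x‖ ^ 2) • EuclideanSpace.single (2 : Fin 3) (1 : ℝ))

lemma bigInv_zero : bigInv 0 = reflect3 := by
  funext x
  simp [bigInv, reflect3]

lemma bigInv_eq (M : ℝ) (hM : 0 < M) (x : E3) (hx : ‖x‖ < M) :
    bigInv M⁻¹ x = inv3 (EuclideanSpace.single (2 : Fin 3) M) M x := by
  set e : E3 := EuclideanSpace.single (2 : Fin 3) (1 : ℝ) with he
  have hee : EuclideanSpace.single (2 : Fin 3) M = M • e := by
    ext i; fin_cases i <;> simp [he]
  have hne : M • e - x ≠ 0 := by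
    intro h
    have h1 : x = M • e := (sub_eq_zero.1 h).symm
    rw [h1, norm_smul, he, PiLp.norm_single] at hx
    simp at hx
    linarith [le_abs_self M]
  have h1 : e - M⁻¹ • x = M⁻¹ • (M • e - x) := by
    rw [smul_sub, smul_smul, inv_mul_cancel₀ hM.ne', one_smul]
  have hD : ‖M • e - x‖ ^ 2 = M ^ 2 - 2 * M * x 2 + ‖x‖ ^ 2 := by
    rw [EuclideanSpace.norm_sq_eq, EuclideanSpace.norm_sq_eq]
    simp [Fin.sum_univ_three, he]
    ring
  have hDpos : 0 < ‖M • e - x‖ ^ 2 := by have := norm_pos_iff.2 hne; positivity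
  unfold bigInv inv3
  rw [← he, hee, h1, norm_smul, mul_pow, norm_sub_rev x, Real.norm_of_nonneg (by positivity)]
  rw [hD] at hDpos ⊢
  have hD0 := hDpos.ne'
  have hM0 := hM.ne'
  generalize hDD : M ^ 2 - 2 * M * x 2 + ‖x‖ ^ 2 = D at hD0 ⊢
  have k : (M⁻¹ ^ 2 * D)⁻¹ = M ^ 2 / D := by field_simp
  have hK : M ^ 2 / D * (M - 2 * x 2 + M⁻¹ * ‖x‖ ^ 2) = M := by
    have : M - 2 * x 2 + M⁻¹ * ‖x‖ ^ 2 = M⁻¹ * D := by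
      rw [← hDD]; field_simp
    rw [this]; field_simp
  rw [k]
  generalize M ^ 2 / D = K at hK ⊢
  have h3 : M • e + K • (x - M • e)
      = (K * (M - 2 * x 2 + M⁻¹ * ‖x‖ ^ 2)) • e + K • (x - M • e) := by rw [hK]
  rw [h3]
  module

lemma bigInv_inj (μ M : ℝ) (hμ0 : 0 ≤ μ) (hμ : μ ≤ M⁻¹) (hM : 0 < M) (x y : E3) (hx : ‖x‖ < M)
    (hy : ‖y‖ < M) (h : bigInv μ x = bigInv μ y) : x = y := by
  rcases hμ0.eq_or_lt with rfl | hpos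
  · rw [bigInv_zero] at h
    exact reflect3_injective h
  · have hM' : M ≤ μ⁻¹ := (le_inv_comm₀ hM hpos).2 hμ
    have h1 := bigInv_eq μ⁻¹ (by positivity) x (hx.trans_le hM')
    have h2 := bigInv_eq μ⁻¹ (by positivity) y (hy.trans_le hM')
    rw [inv_inv] at h1 h2
    rw [h1, h2] at h
    exact inv3_injective _ _ (by positivity) h

/-- Inverting a knot in a sphere whose center is off the knot yields a knot isotopic to
the mirror image of the original knot: `I_{c,r} ∘ γ` is isotopic to `ρ ∘ γ`. -/
theorem inversion_isotopic_to_mirror (γ : ℝ → E3)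
    (hcont : Continuous γ)
    (hper : Function.Periodic γ 1)
    (hinj : ∀ s t : ℝ, γ s = γ t → ∃ n : ℤ, s - t = n)
    (c : E3) (hc : c ∉ Set.range γ) (r : ℝ) (hr : 0 < r) :
    Isotopic (inv3 c r ∘ γ) (reflect3 ∘ γ) := by
  obtain ⟨M, hM, hγM, p, hp⟩ := joined_to_infinity γ hcont hper hinj c hc
  let H₁ : C(unitInterval × ℝ, E3) :=
    ⟨fun q => inv3 (p q.1) (r + (q.1 : ℝ) * (M - r)) (γ q.2), by
      unfold inv3
      have hn : ∀ q : unitInterval × ℝ, ‖γ q.2 - p q.1‖ ^ 2 ≠ 0 := by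
        intro q h
        have h1 : γ q.2 - p q.1 = 0 := by simpa using h
        exact hp q.1 ⟨q.2, sub_eq_zero.1 h1⟩
      have hγ2 : Continuous (fun q : unitInterval × ℝ => γ q.2) := hcont.comp continuous_snd
      have hp2 : Continuous (fun q : unitInterval × ℝ => p q.1) := p.continuous.comp continuous_fst
      have hd : Continuous (fun q : unitInterval × ℝ => γ q.2 - p q.1) := hγ2.sub hp2
      exact hp2.add (((by fun_prop : Continuous fun q : unitInterval × ℝ =>
        (r + (q.1 : ℝ) * (M - r)) ^ 2).div (hd.norm.pow 2) hn).smul hd)⟩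
  have hH₁ : ∀ t, H₁.curry t ∈ Loops := by
    intro t
    constructor
    · intro s
      change inv3 _ _ (γ (s + 1)) = inv3 _ _ (γ s)
      rw [hper]
    · intro s s' h
      have ht0 := t.2.1
      have ht1 := t.2.2
      have hpos : r + (t : ℝ) * (M - r) ≠ 0 := by
        have h1 : r + (t : ℝ) * (M - r) = (1 - t) * r + t * M := by ring
        rw [h1]
        rcases ht0.eq_or_lt with h0 | h0
        · rw [← h0]; linarith
        · have := mul_pos h0 hM
          have := mul_nonneg (sub_nonneg.2 ht1) hr.le
          linarith
      exact hinj s s' (inv3_injective _ _ hpos h)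
  let H₂ : C(unitInterval × ℝ, E3) :=
    ⟨fun q => bigInv ((1 - (q.1 : ℝ)) * M⁻¹) (γ q.2), by
      unfold bigInv
      have hγ2 : Continuous (fun q : unitInterval × ℝ => γ q.2) := hcont.comp continuous_snd
      have hμ : Continuous (fun q : unitInterval × ℝ => (1 - (q.1 : ℝ)) * M⁻¹) := by fun_prop
      have hn : ∀ q : unitInterval × ℝ, ‖EuclideanSpace.single (2 : Fin 3) (1 : ℝ) -
          ((1 - (q.1 : ℝ)) * M⁻¹) • γ q.2‖ ^ 2 ≠ 0 := by
        intro q h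
        have h1 : EuclideanSpace.single (2 : Fin 3) (1 : ℝ) -
          ((1 - (q.1 : ℝ)) * M⁻¹) • γ q.2 = 0 := by simpa using h
        have h2 := congrArg norm (sub_eq_zero.1 h1)
        have h3 : 0 ≤ 1 - (q.1 : ℝ) := sub_nonneg.2 q.1.2.2
        have h4 : 1 - (q.1 : ℝ) ≤ 1 := sub_le_self _ q.1.2.1
        rw [PiLp.norm_single, norm_smul, norm_one, Real.norm_of_nonneg (by positivity)] at h2
        have h5 : M⁻¹ * ‖γ q.2‖ < 1 := by
          rw [inv_mul_lt_iff₀ hM, mul_one]; exact hγM _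
        have h6 : 0 ≤ M⁻¹ * ‖γ q.2‖ := by positivity
        nlinarith
      have hd : Continuous (fun q : unitInterval × ℝ =>
        (‖EuclideanSpace.single (2 : Fin 3) (1 : ℝ) -
          ((1 - (q.1 : ℝ)) * M⁻¹) • γ q.2‖ ^ 2)⁻¹) :=
        Continuous.inv₀ (by fun_prop) hn
      exact hd.smul (by fun_prop)⟩
  have hH₂ : ∀ t, H₂.curry t ∈ Loops := by
    intro t
    constructor
    · intro s
      change bigInv _ (γ (s + 1)) = bigInv _ (γ s)
      rw [hper]
    · intro s s' h
      have h3 : 0 ≤ 1 - (t : ℝ) := sub_nonneg.2 t.2.2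
      have h4 : 1 - (t : ℝ) ≤ 1 := sub_le_self _ t.2.1
      have hMi : 0 < M⁻¹ := by positivity
      exact hinj s s' (bigInv_inj ((1 - (t : ℝ)) * M⁻¹) M (by positivity) (by nlinarith) hM _ _
        (hγM s) (hγM s') h)
  have e : H₁.curry 1 = H₂.curry 0 := by
    ext1 s
    change inv3 (p 1) (r + ((1 : unitInterval) : ℝ) * (M - r)) (γ s) =
      bigInv ((1 - ((0 : unitInterval) : ℝ)) * M⁻¹) (γ s)
    rw [p.target]
    simp only [Set.Icc.coe_one, Set.Icc.coe_zero, one_mul, sub_zero]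
    rw [bigInv_eq M hM _ (hγM s), add_sub_cancel]
  have J₁ := joinedIn_of_family H₁ hH₁
  have J₂ := joinedIn_of_family H₂ hH₂
  rw [e] at J₁
  have J := isotopic_of_joinedIn _ _ (J₁.trans J₂)
  have e0 : ((H₁.curry 0 : C(ℝ, E3)) : ℝ → E3) = inv3 c r ∘ γ := by
    funext s
    change inv3 (p 0) (r + ((0 : unitInterval) : ℝ) * (M - r)) (γ s) = inv3 c r (γ s)
    simp
  have e1 : ((H₂.curry 1 : C(ℝ, E3)) : ℝ → E3) = reflect3 ∘ γ := by
    funext s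
    change bigInv ((1 - ((1 : unitInterval) : ℝ)) * M⁻¹) (γ s) = reflect3 (γ s)
    simp [bigInv_zero]
  rwa [e0, e1] at J
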